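/- arXiv:1208.5702 — 4 statements merged into one kernel-verified Lean document; each statement's English description precedes it below -/
import Mathlib

section
/- Let p ≥ 1, let Ŝ be a p×p real symmetric matrix, and let λ > 0, μ > 0, ε > 0. Assume there exists a triple (Θ̂, Σ̂, Λ̂) of p×p real symmetric matrices satisfying the KKT conditions: Θ̂ = Σ̂; Θ̂ − εI positive semidefinite; for all j ≠ l, (−Λ̂ − Σ̂ + Ŝ)_{jl}/λ lies in the subdifferential of the absolute value at Σ̂_{jl}; (Σ̂ − Ŝ)_{jj} + Λ̂_{jj} = 0 for all j; and ⟨Λ̂, Θ − Θ̂⟩ ≤ 0 for every symmetric Θ with Θ − εI positive semidefinite. Then for any symmetric starting matrices Σ^0, Λ^0, the sequence (Θ^i, Σ^i, Λ^i) generated by the alternating direction iteration — Θ^{i+1} = the Frobenius-norm projection of Σ^i + μΛ^i onto {Θ symmetric : Θ − εI positive semidefinite}; Σ^{i+1} = S(μ(Ŝ − Λ^i) + Θ^{i+1}, λμ)/(1+μ); Λ^{i+1} = Λ^i − (Θ^{i+1} − Σ^{i+1})/μ — converges, and its limit (Θ̄, Σ̄) satisfies Θ̄ = Σ̄, Θ̄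 − εI positive semidefinite, and Σ̄ minimizes the objective ½‖Σ − Ŝ‖_F² + λ|Σ|₁ over all symmetric matrices Σ with Σ − εI positive semidefinite. -/
open scoped BigOperators Topology

/-- The squared Frobenius norm of a real matrix. -/
noncomputable def frobSq {p : ℕ} (A : Matrix (Fin p) (Fin p) ℝ) : ℝ :=
  ∑ i, ∑ j, (A i j) ^ 2

/-- The Frobenius norm of a real matrix. -/
noncomputable def frobNorm {p : ℕ} (A : Matrix (Fin p) (Fin p) ℝ) : ℝ :=
  Real.sqrt (frobSq A)

/-- The Frobenius (trace) inner product `⟨A, B⟩ = trace (Aᵀ B)` of two real matrices. -/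
noncomputable def finner {p : ℕ} (A B : Matrix (Fin p) (Fin p) ℝ) : ℝ :=
  ∑ i, ∑ j, A i j * B i j

/-- Element-wise ℓ¹-norm of the off-diagonal entries of a matrix. -/
noncomputable def offL1 {p : ℕ} (A : Matrix (Fin p) (Fin p) ℝ) : ℝ :=
  ∑ i, ∑ j, if i ≠ j then |A i j| else 0

/-- The off-diagonal soft-thresholding operator:
`S(Z,τ)_{ij} = sign(z_{ij}) max(|z_{ij}| - τ, 0)` for `i ≠ j`, `S(Z,τ)_{ii} = z_{ii}`. -/
noncomputable def softThr {p : ℕ} (Z : Matrix (Fin p) (Fin p) ℝ) (τ : ℝ) :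
    Matrix (Fin p) (Fin p) ℝ :=
  Matrix.of fun i j => if i = j then Z i j else Real.sign (Z i j) * max (|Z i j| - τ) 0

/-- `g` lies in the subdifferential of the absolute value at `y`:
`{sign y}` if `y ≠ 0`, and the interval `[-1, 1]` if `y = 0`. -/
def inSubdiffAbs (g y : ℝ) : Prop :=
  if y = 0 then |g| ≤ 1 else g = Real.sign y

/-!
In the variable `u = Σ - μΛ` the alternating direction method is the Douglas–Rachford iteration
`u ↦ u + P (2 J u - u) - J u`, where `J` (scaled soft-thresholding) is the proximal map of the
penalized loss and `P` is the projection onto the constraint set. Both maps are firmly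
nonexpansive, hence so is the Douglas–Rachford operator, and a KKT point provides a fixed point
of it. The iterates of a firmly nonexpansive map approach each of its fixed points monotonically
while their increments tend to zero, so a cluster point is a fixed point and is the limit of the
whole sequence. At a fixed point the subgradients of the loss and of the constraint cancel, which
is optimality.
-/

section FirmlyNonexpansive

open Filter Function
open scoped RealInnerProductSpace

lemma antitone_dist_iterate {X : Type*} [PseudoMetricSpace X] {T : X → X} (hT : LipschitzWith 1 T)
    {x : X} (hx : IsFixedPt T x) (u : X) : Antitone fun n ↦ dist (T^[n] u) x := by
  refine antitone_nat_of_succ_le fun n ↦ ?_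
  calc dist (T^[n + 1] u) x = dist (T (T^[n] u)) (T x) := by rw [iterate_succ_apply', hx.eq]
    _ ≤ dist (T^[n] u) x := hT.dist_le_mul_of_le le_rfl |>.trans_eq (by simp)

variable {E : Type*} [NormedAddCommGroup E] [InnerProductSpace ℝ E] {T J P : E → E}

/-- Firmly nonexpansive maps of a real inner product space, the class that contains metric
projections onto convex sets and proximal maps of convex functions. -/
def IsFirmlyNonexpansive (T : E → E) : Prop :=
  ∀ x y, ‖T x - T y‖ ^ 2 ≤ ⟪x - y, T x - T y⟫

namespace IsFirmlyNonexpansive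

lemma norm_sub_sq_add_le (hT : IsFirmlyNonexpansive T) (x y : E) :
    ‖T x - T y‖ ^ 2 + ‖(x - T x) - (y - T y)‖ ^ 2 ≤ ‖x - y‖ ^ 2 := by
  rw [sub_sub_sub_comm x, norm_sub_sq_real (x - y)]
  linarith [hT x y]

lemma lipschitzWith_one (hT : IsFirmlyNonexpansive T) : LipschitzWith 1 T := by
  refine LipschitzWith.mk_one fun x y ↦ ?_
  rw [dist_eq_norm, dist_eq_norm]
  refine le_of_sq_le_sq ?_ (norm_nonneg _)
  linarith [hT.norm_sub_sq_add_le x y, sq_nonneg ‖(x - T x) - (y - T y)‖]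

lemma tendsto_iterate_sub_apply (hT : IsFirmlyNonexpansive T) {x : E} (hx : IsFixedPt T x)
    (u : E) : Tendsto (fun n ↦ T^[n] u - T (T^[n] u)) atTop (𝓝 0) := by
  set d : ℕ → ℝ := fun n ↦ dist (T^[n] u) x
  have hd : Antitone d := antitone_dist_iterate hT.lipschitzWith_one hx u
  have hlim : Tendsto d atTop (𝓝 (⨅ n, d n)) :=
    tendsto_atTop_ciInf hd ⟨0, Set.forall_mem_range.2 fun _ ↦ dist_nonneg⟩
  have hgap : Tendsto (fun n ↦ d n ^ 2 - d (n + 1) ^ 2) atTop (𝓝 0) := by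
    simpa using (hlim.pow 2).sub (((tendsto_add_atTop_iff_nat 1).2 hlim).pow 2)
  have hsq (n : ℕ) : ‖T^[n] u - T (T^[n] u)‖ ^ 2 ≤ d n ^ 2 - d (n + 1) ^ 2 := by
    have h := hT.norm_sub_sq_add_le (T^[n] u) x
    rw [hx.eq, sub_self, sub_zero, ← dist_eq_norm _ x, ← dist_eq_norm _ x,
      ← iterate_succ_apply' T] at h
    rw [← iterate_succ_apply' T]
    exact le_sub_iff_add_le'.2 h
  have := squeeze_zero (fun n ↦ sq_nonneg _) hsq hgap
  rw [tendsto_zero_iff_norm_tendsto_zero]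
  simpa using this.sqrt

theorem exists_tendsto_iterate [ProperSpace E] (hT : IsFirmlyNonexpansive T)
    (hfix : ∃ x, IsFixedPt T x) (u : E) :
    ∃ x, IsFixedPt T x ∧ Tendsto (fun n ↦ T^[n] u) atTop (𝓝 x) := by
  obtain ⟨x₀, hx₀⟩ := hfix
  have hmem (n : ℕ) : T^[n] u ∈ Metric.closedBall x₀ (dist u x₀) :=
    antitone_dist_iterate hT.lipschitzWith_one hx₀ u n.zero_le
  obtain ⟨x, -, φ, hφ, hx⟩ := (isCompact_closedBall _ _).tendsto_subseq hmem
  have hfixx : IsFixedPt T x := by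
    have hTx := hx.sub ((hT.lipschitzWith_one.continuous.tendsto x).comp hx)
    have h0 := (hT.tendsto_iterate_sub_apply hx₀ u).comp hφ.tendsto_atTop
    exact (sub_eq_zero.1 (tendsto_nhds_unique hTx h0)).symm
  refine ⟨x, hfixx, tendsto_iff_dist_tendsto_zero.2 ?_⟩
  exact (tendsto_iff_tendsto_subseq_of_antitone
    (antitone_dist_iterate hT.lipschitzWith_one hfixx u) hφ.tendsto_atTop).2
    (tendsto_iff_dist_tendsto_zero.1 hx)

end IsFirmlyNonexpansive

/-- The Douglas–Rachford operator of a pair of maps, in practice the proximal maps of the two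
terms of a function to be minimized. -/
def douglasRachford (J P : E → E) (u : E) : E :=
  u + (P ((2 : ℝ) • J u - u) - J u)

lemma isFixedPt_douglasRachford_iff {u : E} :
    IsFixedPt (douglasRachford J P) u ↔ P ((2 : ℝ) • J u - u) = J u := by
  rw [IsFixedPt, douglasRachford, add_eq_left, sub_eq_zero]

lemma isFirmlyNonexpansive_douglasRachford (hJ : IsFirmlyNonexpansive J)
    (hP : IsFirmlyNonexpansive P) : IsFirmlyNonexpansive (douglasRachford J P) := by
  intro u v
  have hJuv := hJ u v
  have hPuv := hP ((2 : ℝ) • J u - u) ((2 : ℝ) • J v - v)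
  simp only [douglasRachford]
  generalize P ((2 : ℝ) • J u - u) = p at *
  generalize P ((2 : ℝ) • J v - v) = q at *
  rw [show (2 : ℝ) • J u - u - ((2 : ℝ) • J v - v) = (2 : ℝ) • (J u - J v) - (u - v) by module,
    inner_sub_left, real_inner_smul_left] at hPuv
  rw [show u + (p - J u) - (v + (q - J v)) = (u - v) + ((p - q) - (J u - J v)) by abel,
    norm_add_sq_real (u - v), norm_sub_sq_real (p - q), inner_add_right, inner_sub_right,
    real_inner_self_eq_norm_sq, real_inner_comm (J u - J v) (p - q)]
  linarith

/-- The alternating direction method for minimizing a sum of two functions whose `μ`-multiples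
have proximal maps `J` and `P`: `y` and `x` are the two copies of the variable, `l` is the
multiplier of the constraint `y = x`, and `x 0`, `l 0` are free. -/
structure IsADMM (J P : E → E) (μ : ℝ) (y x l : ℕ → E) : Prop where
  fst_succ (n : ℕ) : y (n + 1) = P (x n + μ • l n)
  snd_succ (n : ℕ) : x (n + 1) = J (y (n + 1) - μ • l n)
  multiplier_succ (n : ℕ) : l (n + 1) = l n - μ⁻¹ • (y (n + 1) - x (n + 1))

namespace IsADMM

variable {μ : ℝ} {y x l : ℕ → E}

lemma snd_sub_smul_multiplier (h : IsADMM J P μ y x l) (hμ : μ ≠ 0) (n : ℕ) :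
    x (n + 1) - μ • l (n + 1) = y (n + 1) - μ • l n := by
  rw [h.multiplier_succ, smul_sub, smul_inv_smul₀ hμ]
  abel

lemma snd_succ_eq (h : IsADMM J P μ y x l) (hμ : μ ≠ 0) (n : ℕ) :
    x (n + 1) = J (x (n + 1) - μ • l (n + 1)) := by
  rw [h.snd_sub_smul_multiplier hμ, ← h.snd_succ]

lemma sub_smul_eq_iterate_douglasRachford (h : IsADMM J P μ y x l) (hμ : μ ≠ 0) (n : ℕ) :
    x (n + 1) - μ • l (n + 1) = (douglasRachford J P)^[n] (x 1 - μ • l 1) := by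
  induction n with
  | zero => rfl
  | succ n ih =>
    rw [iterate_succ_apply', ← ih, douglasRachford, ← h.snd_succ_eq hμ,
      show (2 : ℝ) • x (n + 1) - (x (n + 1) - μ • l (n + 1)) = x (n + 1) + μ • l (n + 1) by module,
      ← h.fst_succ, h.snd_sub_smul_multiplier hμ]
    abel

theorem exists_tendsto [ProperSpace E] (h : IsADMM J P μ y x l) (hμ : μ ≠ 0)
    (hJ : IsFirmlyNonexpansive J) (hP : IsFirmlyNonexpansive P)
    (hfix : ∃ x₀ l₀, J (x₀ - μ • l₀) = x₀ ∧ P (x₀ + μ • l₀) = x₀) :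
    ∃ x' l', Tendsto y atTop (𝓝 x') ∧ Tendsto x atTop (𝓝 x') ∧ Tendsto l atTop (𝓝 l') ∧
      J (x' - μ • l') = x' ∧ P (x' + μ • l') = x' := by
  have hfixT : ∃ u₀, IsFixedPt (douglasRachford J P) u₀ := by
    obtain ⟨x₀, l₀, hJ₀, hP₀⟩ := hfix
    refine ⟨x₀ - μ • l₀, isFixedPt_douglasRachford_iff.2 ?_⟩
    rw [hJ₀, two_smul, add_sub_assoc, sub_sub_cancel, hP₀]
  obtain ⟨u, hu, hulim⟩ := (isFirmlyNonexpansive_douglasRachford hJ hP).exists_tendsto_iterate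
    hfixT (x 1 - μ • l 1)
  simp only [← h.sub_smul_eq_iterate_douglasRachford hμ] at hulim
  have hxlim : Tendsto (fun n ↦ x (n + 1)) atTop (𝓝 (J u)) :=
    ((hJ.lipschitzWith_one.continuous.tendsto u).comp hulim).congr
      fun n ↦ (h.snd_succ_eq hμ n).symm
  have hllim : Tendsto (fun n ↦ l (n + 1)) atTop (𝓝 (μ⁻¹ • (J u - u))) :=
    ((hxlim.sub hulim).const_smul μ⁻¹).congr fun n ↦ by rw [sub_sub_cancel, inv_smul_smul₀ hμ]
  have hPu : P (J u + μ • μ⁻¹ • (J u - u)) = J u := by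
    rw [smul_inv_smul₀ hμ, ← add_sub_assoc, ← two_smul ℝ, isFixedPt_douglasRachford_iff.1 hu]
  have hylim : Tendsto (fun n ↦ y (n + 2)) atTop (𝓝 (J u)) := by
    have hPlim := (hP.lipschitzWith_one.continuous.tendsto _).comp (hxlim.add (hllim.const_smul μ))
    rw [hPu] at hPlim
    exact hPlim.congr fun n ↦ (h.fst_succ (n + 1)).symm
  refine ⟨J u, μ⁻¹ • (J u - u), (tendsto_add_atTop_iff_nat 2).1 hylim,
    (tendsto_add_atTop_iff_nat 1).1 hxlim, (tendsto_add_atTop_iff_nat 1).1 hllim, ?_, hPu⟩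
  rw [smul_inv_smul₀ hμ, sub_sub_cancel]

end IsADMM

end FirmlyNonexpansive

section ProximalPoint

open Filter
open scoped RealInnerProductSpace

variable {E : Type*} [NormedAddCommGroup E] [InnerProductSpace ℝ E] {f g : E → ℝ} {C D : Set E}
  {u v x y : E}

/-- `x` is the proximal point of `u` for the function equal to `f` on `C` and to `+∞` elsewhere.
The minimization of `f z + ‖z - u‖ ^ 2 / 2` over `z ∈ C` is encoded by its optimality condition:
`u - x` is a subgradient at `x`. -/
def IsProxOn (f : E → ℝ) (C : Set E) (u x : E) : Prop :=
  x ∈ C ∧ ∀ z ∈ C, f x + ⟪u - x, z - x⟫ ≤ f z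

namespace IsProxOn

lemma norm_sub_sq_le_inner (hx : IsProxOn f C u x) (hy : IsProxOn f C v y) :
    ‖x - y‖ ^ 2 ≤ ⟪u - v, x - y⟫ := by
  have hxy := hx.2 y hy.1
  have hyx := hy.2 x hx.1
  rw [← neg_sub x y, inner_neg_right] at hxy
  have hsum : ⟪u - x, x - y⟫ - ⟪v - y, x - y⟫ = ⟪u - v, x - y⟫ - ‖x - y‖ ^ 2 := by
    rw [← inner_sub_left, sub_sub_sub_comm, inner_sub_left, real_inner_self_eq_norm_sq]
  linarith

lemma eq (hx : IsProxOn f C u x) (hy : IsProxOn f C u y) : x = y := by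
  have h := hx.norm_sub_sq_le_inner hy
  rw [sub_self, inner_zero_left] at h
  simpa [sub_eq_zero] using h.antisymm (sq_nonneg _)

lemma isFirmlyNonexpansive {J : E → E} (hJ : ∀ u, IsProxOn f C u (J u)) :
    IsFirmlyNonexpansive J :=
  fun u v ↦ (hJ u).norm_sub_sq_le_inner (hJ v)

lemma isMinOn_add (hx : IsProxOn f C u x) (hy : IsProxOn g D v x) (huv : u + v = x + x) :
    IsMinOn (f + g) (C ∩ D) x := by
  rw [isMinOn_iff]
  intro z hz
  have hcancel : ⟪u - x, z - x⟫ + ⟪v - x, z - x⟫ = 0 := by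
    rw [← inner_add_left, sub_add_sub_comm, huv, sub_self, inner_zero_left]
  simp only [Pi.add_apply]
  linarith [hx.2 z hz.1, hy.2 z hz.2]

lemma zero_of_forall_norm_sub_le (hD : Convex ℝ D) (hx : x ∈ D)
    (hmin : ∀ z ∈ D, ‖u - x‖ ≤ ‖u - z‖) : IsProxOn 0 D u x := by
  have : Nonempty D := ⟨⟨x, hx⟩⟩
  have hinf : ‖u - x‖ = ⨅ z : D, ‖u - z‖ :=
    le_antisymm (le_ciInf fun z ↦ hmin z z.2)
      (ciInf_le ⟨0, Set.forall_mem_range.2 fun _ ↦ norm_nonneg _⟩ (⟨x, hx⟩ : D))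
  simpa [IsProxOn, hx] using (norm_eq_iInf_iff_real_inner_le_zero hD hx).1 hinf

lemma exists_zero [CompleteSpace E] (hne : D.Nonempty) (hD : Convex ℝ D) (hclosed : IsClosed D)
    (u : E) : ∃ x, IsProxOn 0 D u x := by
  obtain ⟨x, hx, hinf⟩ := exists_norm_eq_iInf_of_complete_convex hne hclosed.isComplete hD u
  exact ⟨x, by simpa [IsProxOn, hx] using (norm_eq_iInf_iff_real_inner_le_zero hD hx).1 hinf⟩

lemma mul_half_norm_sub_sq_add {h : E → ℝ} {s : E} {μ : ℝ} (hμ : 0 ≤ μ) (hx : x ∈ C)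
    (hsub : ∀ z ∈ C, μ * h x + ⟪μ • s + u - (1 + μ) • x, z - x⟫ ≤ μ * h z) :
    IsProxOn (fun z ↦ μ * (‖z - s‖ ^ 2 / 2 + h z)) C u x := by
  refine ⟨hx, fun z hz ↦ ?_⟩
  have hsplit : u - x = (μ • s + u - (1 + μ) • x) + μ • (x - s) := by module
  have hquad : ‖z - s‖ ^ 2 = ‖x - s‖ ^ 2 + 2 * ⟪x - s, z - x⟫ + ‖z - x‖ ^ 2 := by
    rw [← norm_add_sq_real, sub_add_sub_cancel']
  simp only [hsplit, inner_add_left, real_inner_smul_left, hquad]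
  linarith [hsub z hz, mul_nonneg hμ (sq_nonneg ‖z - x‖)]

end IsProxOn

theorem IsADMM.exists_tendsto_isMinOn [ProperSpace E] {J P : E → E} {μ : ℝ} {y x l : ℕ → E}
    (h : IsADMM J P μ y x l) (hμ : μ ≠ 0) (hJ : ∀ u, IsProxOn f C u (J u))
    (hP : ∀ u, IsProxOn g D u (P u))
    (hKKT : ∃ x₀ l₀, IsProxOn f C (x₀ - μ • l₀) x₀ ∧ IsProxOn g D (x₀ + μ • l₀) x₀) :
    ∃ x' l', Tendsto y atTop (𝓝 x') ∧ Tendsto x atTop (𝓝 x') ∧ Tendsto l atTop (𝓝 l') ∧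
      x' ∈ C ∩ D ∧ IsMinOn (f + g) (C ∩ D) x' := by
  obtain ⟨x₀, l₀, hx₀, hy₀⟩ := hKKT
  obtain ⟨x', l', hy, hx, hl, hJ', hP'⟩ := h.exists_tendsto hμ (IsProxOn.isFirmlyNonexpansive hJ)
    (IsProxOn.isFirmlyNonexpansive hP) ⟨x₀, l₀, (hJ _).eq hx₀, (hP _).eq hy₀⟩
  have hfx' := hJ (x' - μ • l')
  have hgx' := hP (x' + μ • l')
  rw [hJ'] at hfx'
  rw [hP'] at hgx'
  exact ⟨x', l', hy, hx, hl, ⟨hfx'.1, hgx'.1⟩, hfx'.isMinOn_add hgx' (by abel)⟩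

end ProximalPoint

section Subdifferential

lemma realSign_mul_self (y : ℝ) : Real.sign y * y = |y| := by
  rcases lt_trichotomy y 0 with hy | rfl | hy
  · rw [Real.sign_of_neg hy, abs_of_neg hy, neg_one_mul]
  · simp
  · rw [Real.sign_of_pos hy, abs_of_pos hy, one_mul]

lemma inSubdiffAbs_iff {g y : ℝ} : inSubdiffAbs g y ↔ |g| ≤ 1 ∧ g * y = |y| := by
  unfold inSubdiffAbs
  split_ifs with hy
  · simp [hy]
  · rw [← realSign_mul_self y, mul_left_inj' hy, iff_and_self]
    rintro rfl
    rcases Real.sign_apply_eq_of_ne_zero y hy with h | h <;> simp [h]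

lemma inSubdiffAbs_mul_right_iff {c : ℝ} (hc : 0 < c) {g y : ℝ} :
    inSubdiffAbs g (c * y) ↔ inSubdiffAbs g y := by
  simp only [inSubdiffAbs_iff, abs_mul, abs_of_pos hc, mul_left_comm g c, mul_right_inj' hc.ne']

lemma inSubdiffAbs.abs_add_mul_sub_le {g y : ℝ} (h : inSubdiffAbs g y) (z : ℝ) :
    |y| + g * (z - y) ≤ |z| := by
  obtain ⟨hg, hgy⟩ := inSubdiffAbs_iff.1 h
  calc |y| + g * (z - y) = g * z := by rw [mul_sub, hgy]; ring
    _ ≤ |g| * |z| := abs_mul g z ▸ le_abs_self _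
    _ ≤ |z| := mul_le_of_le_one_left (abs_nonneg z) hg

lemma inSubdiffAbs_softThreshold {τ : ℝ} (hτ : 0 < τ) (z : ℝ) :
    inSubdiffAbs (τ⁻¹ * (z - Real.sign z * max (|z| - τ) 0))
      (Real.sign z * max (|z| - τ) 0) := by
  rcases le_or_gt |z| τ with hz | hz
  · rw [max_eq_right (sub_nonpos.2 hz), mul_zero, sub_zero]
    simpa [inSubdiffAbs, abs_mul, abs_of_pos hτ, inv_mul_le_one₀ hτ] using hz
  · have hsign : Real.sign z * Real.sign z = 1 := by
      have hz0 : z ≠ 0 := abs_pos.1 (hτ.trans hz)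
      rcases Real.sign_apply_eq_of_ne_zero z hz0 with h | h <;> simp [h]
    have hgap : z - Real.sign z * (|z| - τ) = τ * Real.sign z := by
      rw [← realSign_mul_self]
      linear_combination -z * hsign
    rw [max_eq_left (sub_nonneg.2 hz.le), hgap, inv_mul_cancel_left₀ hτ.ne', mul_comm (Real.sign z),
      inSubdiffAbs_mul_right_iff (sub_pos.2 hz), inSubdiffAbs_iff, hsign]
    rcases mul_self_eq_one_iff.1 hsign with h | h <;> simp [h]

variable {p : ℕ} {G A : Matrix (Fin p) (Fin p) ℝ}

/-- `G` lies in the subdifferential at `A` of the off-diagonal `ℓ¹`-norm. -/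
def IsOffL1Subgradient (G A : Matrix (Fin p) (Fin p) ℝ) : Prop :=
  (∀ i j, i ≠ j → inSubdiffAbs (G i j) (A i j)) ∧ ∀ i, G i i = 0

namespace IsOffL1Subgradient

lemma offL1_add_finner_le (h : IsOffL1Subgradient G A) (B : Matrix (Fin p) (Fin p) ℝ) :
    offL1 A + finner G (B - A) ≤ offL1 B := by
  simp only [offL1, finner, ← Finset.sum_add_distrib]
  refine Finset.sum_le_sum fun i _ ↦ Finset.sum_le_sum fun j _ ↦ ?_
  rcases eq_or_ne i j with rfl | hij
  · simp [h.2]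
  · simpa [hij] using (h.1 i j hij).abs_add_mul_sub_le (B i j)

lemma smul_right (h : IsOffL1Subgradient G A) {c : ℝ} (hc : 0 < c) :
    IsOffL1Subgradient G (c • A) :=
  ⟨fun i j hij ↦ (inSubdiffAbs_mul_right_iff hc).2 (h.1 i j hij), h.2⟩

end IsOffL1Subgradient

lemma isOffL1Subgradient_softThr {τ : ℝ} (hτ : 0 < τ) (Z : Matrix (Fin p) (Fin p) ℝ) :
    IsOffL1Subgradient (τ⁻¹ • (Z - softThr Z τ)) (softThr Z τ) := by
  refine ⟨fun i j hij ↦ ?_, fun i ↦ by simp [softThr]⟩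
  simpa [softThr, hij] using inSubdiffAbs_softThreshold hτ (Z i j)

end Subdifferential

section PosSemidef

variable {n : Type*}

lemma convex_isSymm : Convex ℝ {A : Matrix n n ℝ | A.IsSymm} :=
  fun _ hA _ hB _ _ _ _ _ ↦ (hA.smul _).add (hB.smul _)

lemma isClosed_isSymm : IsClosed {A : Matrix n n ℝ | A.IsSymm} :=
  isClosed_eq (by fun_prop) continuous_id

lemma convex_posSemidef : Convex ℝ {A : Matrix n n ℝ | A.PosSemidef} :=
  fun _ hA _ hB _ _ ha hb _ ↦ (hA.smul ha).add (hB.smul hb)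

lemma isClosed_posSemidef : IsClosed {A : Matrix n n ℝ | A.PosSemidef} := by
  simp only [Matrix.PosSemidef, Set.ofPred_and, Set.ofPred_forall]
  refine (isClosed_eq (by fun_prop) continuous_id).inter (isClosed_iInter fun v ↦ ?_)
  exact isClosed_le continuous_const
    (continuous_finsetSum _ fun i _ ↦ continuous_finsetSum _ fun j _ ↦ by fun_prop)

variable (B : Matrix n n ℝ)

lemma convex_isSymm_and_posSemidef_sub :
    Convex ℝ {A : Matrix n n ℝ | A.IsSymm ∧ (A - B).PosSemidef} := by
  simp only [sub_eq_neg_add]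
  exact convex_isSymm.inter (convex_posSemidef.translate_preimage_right (-B))

lemma isClosed_isSymm_and_posSemidef_sub :
    IsClosed {A : Matrix n n ℝ | A.IsSymm ∧ (A - B).PosSemidef} :=
  isClosed_isSymm.inter (isClosed_posSemidef.preimage (continuous_id.sub continuous_const))

end PosSemidef

section Frobenius

open Filter
open scoped RealInnerProductSpace

attribute [local instance] Matrix.frobeniusNormedAddCommGroup Matrix.frobeniusNormedSpace

/-- The Frobenius inner product, which induces the Frobenius norm. It is not a global instance
because Mathlib does not fix a norm on matrices. -/
noncomputable local instance frobeniusInnerProductSpace {m n : Type*} [Fintype m] [Fintype n] :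
    InnerProductSpace ℝ (Matrix m n ℝ) where
  inner A B := ∑ i, ∑ j, A i j * B i j
  norm_sq_eq_re_inner A := by
    have hnonneg : 0 ≤ ∑ i, ∑ j, A i j ^ 2 :=
      Finset.sum_nonneg fun _ _ ↦ Finset.sum_nonneg fun _ _ ↦ sq_nonneg _
    simp only [Matrix.frobenius_norm_def, ← Real.sqrt_eq_rpow, Real.norm_eq_abs, Real.rpow_two,
      sq_abs, Real.sq_sqrt hnonneg, ← sq, RCLike.re_to_real]
  conj_inner_symm A B := by simp [mul_comm]
  add_left A B C := by simp [add_mul, Finset.sum_add_distrib]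
  smul_left A B r := by simp [Finset.mul_sum, mul_assoc]

variable {p : ℕ}

lemma finner_eq_inner (A B : Matrix (Fin p) (Fin p) ℝ) : finner A B = ⟪A, B⟫ := rfl

lemma frobSq_eq_norm_sq (A : Matrix (Fin p) (Fin p) ℝ) : frobSq A = ‖A‖ ^ 2 := by
  rw [← real_inner_self_eq_norm_sq, ← finner_eq_inner]
  simp only [frobSq, finner, sq]

lemma frobNorm_eq_norm (A : Matrix (Fin p) (Fin p) ℝ) : frobNorm A = ‖A‖ := by
  rw [frobNorm, frobSq_eq_norm_sq, Real.sqrt_sq (norm_nonneg A)]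

/-- The `ℓ¹`-penalized least-squares objective `½‖S - Shat‖² + lam * |S|₁`. -/
noncomputable def penalizedLoss (Shat : Matrix (Fin p) (Fin p) ℝ) (lam : ℝ)
    (S : Matrix (Fin p) (Fin p) ℝ) : ℝ :=
  frobSq (S - Shat) / 2 + lam * offL1 S

variable {Shat S U L : Matrix (Fin p) (Fin p) ℝ} {lam mu : ℝ}

lemma IsOffL1Subgradient.isProxOn_penalizedLoss (hlam : 0 < lam) (hmu : 0 < mu)
    (h : IsOffL1Subgradient ((lam * mu)⁻¹ • (mu • Shat + U - (1 + mu) • S)) S) :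
    IsProxOn (mu • penalizedLoss Shat lam) Set.univ U S := by
  have hprox : IsProxOn (fun X ↦ mu * (‖X - Shat‖ ^ 2 / 2 + lam * offL1 X)) Set.univ U S := by
    refine .mul_half_norm_sub_sq_add hmu.le (Set.mem_univ S) fun Y _ ↦ ?_
    have hY := mul_le_mul_of_nonneg_left (h.offL1_add_finner_le Y) (mul_pos hlam hmu).le
    rw [finner_eq_inner, mul_add, real_inner_smul_left,
      mul_inv_cancel_left₀ (mul_pos hlam hmu).ne'] at hY
    linarith
  simp only [← frobSq_eq_norm_sq] at hprox
  exact hprox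

lemma isProxOn_penalizedLoss_softThr (hlam : 0 < lam) (hmu : 0 < mu)
    (Shat U : Matrix (Fin p) (Fin p) ℝ) :
    IsProxOn (mu • penalizedLoss Shat lam) Set.univ U
      ((1 + mu)⁻¹ • softThr (mu • Shat + U) (lam * mu)) := by
  have hmu1 : 0 < 1 + mu := by linarith
  refine IsOffL1Subgradient.isProxOn_penalizedLoss hlam hmu ?_
  rw [smul_inv_smul₀ hmu1.ne']
  exact (isOffL1Subgradient_softThr (mul_pos hlam hmu) _).smul_right (inv_pos.2 hmu1)

lemma isProxOn_penalizedLoss_of_kkt (hlam : 0 < lam) (hmu : 0 < mu)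
    (hoff : ∀ j l, j ≠ l → inSubdiffAbs ((-L - S + Shat) j l / lam) (S j l))
    (hdiag : ∀ j, (S - Shat) j j + L j j = 0) :
    IsProxOn (mu • penalizedLoss Shat lam) Set.univ (S - mu • L) S := by
  refine IsOffL1Subgradient.isProxOn_penalizedLoss hlam hmu ?_
  have hgrad : (lam * mu)⁻¹ • (mu • Shat + (S - mu • L) - (1 + mu) • S) =
      lam⁻¹ • (-L - S + Shat) := by
    rw [show mu • Shat + (S - mu • L) - (1 + mu) • S = mu • (-L - S + Shat) by module, mul_inv,
      mul_smul, inv_smul_smul₀ hmu.ne']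
  rw [hgrad]
  refine ⟨fun i j hij ↦ ?_, fun i ↦ ?_⟩
  · simpa only [Matrix.smul_apply, smul_eq_mul, div_eq_inv_mul] using hoff i j hij
  · have hi := hdiag i
    simp only [Matrix.sub_apply] at hi
    simp only [Matrix.smul_apply, Matrix.add_apply, Matrix.sub_apply, Matrix.neg_apply, smul_eq_mul]
    rw [show -L i i - S i i + Shat i i = 0 by linarith, mul_zero]

theorem stmt_1_general {K : Set (Matrix (Fin p) (Fin p) ℝ)} (hconv : Convex ℝ K)
    (hclosed : IsClosed K) (hlam : 0 < lam) (hmu : 0 < mu)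
    (hKKT : ∃ Sghat Lmhat : Matrix (Fin p) (Fin p) ℝ, Sghat ∈ K ∧
      (∀ j l, j ≠ l → inSubdiffAbs ((-Lmhat - Sghat + Shat) j l / lam) (Sghat j l)) ∧
      (∀ j, (Sghat - Shat) j j + Lmhat j j = 0) ∧
      ∀ T ∈ K, finner Lmhat (T - Sghat) ≤ 0)
    {Th Sg Lm : ℕ → Matrix (Fin p) (Fin p) ℝ}
    (hThstep : ∀ i, Th (i + 1) ∈ K ∧ ∀ T ∈ K,
      frobNorm (Th (i + 1) - (Sg i + mu • Lm i)) ≤ frobNorm (T - (Sg i + mu • Lm i)))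
    (hSgstep : ∀ i, Sg (i + 1) =
      (1 + mu)⁻¹ • softThr (mu • (Shat - Lm i) + Th (i + 1)) (lam * mu))
    (hLmstep : ∀ i, Lm (i + 1) = Lm i - mu⁻¹ • (Th (i + 1) - Sg (i + 1))) :
    ∃ Sgbar Lmbar : Matrix (Fin p) (Fin p) ℝ,
      Tendsto Th atTop (𝓝 Sgbar) ∧ Tendsto Sg atTop (𝓝 Sgbar) ∧ Tendsto Lm atTop (𝓝 Lmbar) ∧
      Sgbar ∈ K ∧ IsMinOn (penalizedLoss Shat lam) K Sgbar := by
  obtain ⟨Sghat, Lmhat, hmem, hoff, hdiag, hnormal⟩ := hKKT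
  choose P hP using IsProxOn.exists_zero ⟨Sghat, hmem⟩ hconv hclosed
  have hproj (i : ℕ) : IsProxOn 0 K (Sg i + mu • Lm i) (Th (i + 1)) :=
    .zero_of_forall_norm_sub_le hconv (hThstep i).1 fun T hT ↦ by
      simpa only [frobNorm_eq_norm, norm_sub_rev] using (hThstep i).2 T hT
  have hadmm : IsADMM (fun U ↦ (1 + mu)⁻¹ • softThr (mu • Shat + U) (lam * mu)) P mu Th Sg Lm :=
    ⟨fun i ↦ (hproj i).eq (hP _), fun i ↦ by rw [hSgstep, smul_sub, sub_add_eq_add_sub, add_sub],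
      hLmstep⟩
  have hcone : IsProxOn 0 K (Sghat + mu • Lmhat) Sghat := by
    refine ⟨hmem, fun T hT ↦ ?_⟩
    rw [add_sub_cancel_left, real_inner_smul_left, ← finner_eq_inner]
    simpa using mul_nonpos_of_nonneg_of_nonpos hmu.le (hnormal T hT)
  obtain ⟨Sgbar, Lmbar, hTh, hSg, hLm, hmem', hmin⟩ := hadmm.exists_tendsto_isMinOn hmu.ne'
    (isProxOn_penalizedLoss_softThr hlam hmu Shat) hP
    ⟨Sghat, Lmhat, isProxOn_penalizedLoss_of_kkt hlam hmu hoff hdiag, hcone⟩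
  refine ⟨Sgbar, Lmbar, hTh, hSg, hLm, hmem'.2, isMinOn_iff.2 fun S hS ↦ ?_⟩
  simpa [hmu] using isMinOn_iff.1 hmin S ⟨Set.mem_univ S, hS⟩

end Frobenius

/-- Global convergence of the alternating direction method: provided a KKT point of the
positive-definite constrained ℓ¹-penalized problem exists, the ADMM sequence
`(Θⁱ, Σⁱ, Λⁱ)` converges from any symmetric starting point, its limit satisfies
`Θ̄ = Σ̄` with `Θ̄ − εI ⪰ 0`, and `Σ̄` minimizes `½‖Σ − Ŝ‖_F² + λ|Σ|₁` over all
symmetric `Σ` with `Σ − εI ⪰ 0`. -/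
theorem stmt_1 {p : ℕ} (hp : 1 ≤ p)
    (Shat : Matrix (Fin p) (Fin p) ℝ) (hShat : Shat.IsSymm)
    (lam mu ε : ℝ) (hlam : 0 < lam) (hmu : 0 < mu) (hε : 0 < ε)
    -- existence of a KKT point
    (hKKT : ∃ That Sghat Lmhat : Matrix (Fin p) (Fin p) ℝ,
      That.IsSymm ∧ Sghat.IsSymm ∧ Lmhat.IsSymm ∧
      That = Sghat ∧
      (That - ε • (1 : Matrix (Fin p) (Fin p) ℝ)).PosSemidef ∧
      (∀ j l, j ≠ l → inSubdiffAbs ((-Lmhat - Sghat + Shat) j l / lam) (Sghat j l)) ∧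
      (∀ j, (Sghat - Shat) j j + Lmhat j j = 0) ∧
      (∀ Th : Matrix (Fin p) (Fin p) ℝ, Th.IsSymm →
        (Th - ε • (1 : Matrix (Fin p) (Fin p) ℝ)).PosSemidef →
        finner Lmhat (Th - That) ≤ 0))
    -- the alternating direction iterates
    (Th Sg Lm : ℕ → Matrix (Fin p) (Fin p) ℝ)
    (hSg0 : (Sg 0).IsSymm) (hLm0 : (Lm 0).IsSymm)
    (hThstep : ∀ i, (Th (i + 1)).IsSymm ∧
      (Th (i + 1) - ε • (1 : Matrix (Fin p) (Fin p) ℝ)).PosSemidef ∧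
      ∀ T : Matrix (Fin p) (Fin p) ℝ, T.IsSymm →
        (T - ε • (1 : Matrix (Fin p) (Fin p) ℝ)).PosSemidef →
        frobNorm (Th (i + 1) - (Sg i + mu • Lm i)) ≤ frobNorm (T - (Sg i + mu • Lm i)))
    (hSgstep : ∀ i, Sg (i + 1) =
      (1 + mu)⁻¹ • softThr (mu • (Shat - Lm i) + Th (i + 1)) (lam * mu))
    (hLmstep : ∀ i, Lm (i + 1) = Lm i - mu⁻¹ • (Th (i + 1) - Sg (i + 1))) :
    ∃ Thbar Sgbar Lmbar : Matrix (Fin p) (Fin p) ℝ,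
      Filter.Tendsto Th Filter.atTop (𝓝 Thbar) ∧
      Filter.Tendsto Sg Filter.atTop (𝓝 Sgbar) ∧
      Filter.Tendsto Lm Filter.atTop (𝓝 Lmbar) ∧
      Thbar = Sgbar ∧
      (Thbar - ε • (1 : Matrix (Fin p) (Fin p) ℝ)).PosSemidef ∧
      ∀ S : Matrix (Fin p) (Fin p) ℝ, S.IsSymm →
        (S - ε • (1 : Matrix (Fin p) (Fin p) ℝ)).PosSemidef →
        frobSq (Sgbar - Shat) / 2 + lam * offL1 Sgbar ≤
          frobSq (S - Shat) / 2 + lam * offL1 S := by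
  obtain ⟨That, _, Lmhat, hsymm, -, -, rfl, hpsd, hoff, hdiag, hnormal⟩ := hKKT
  obtain ⟨Sgbar, Lmbar, hTh, hSg, hLm, hmem, hmin⟩ :=
    stmt_1_general (convex_isSymm_and_posSemidef_sub _) (isClosed_isSymm_and_posSemidef_sub _)
      hlam hmu ⟨That, Lmhat, ⟨hsymm, hpsd⟩, hoff, hdiag, fun T hT ↦ hnormal T hT.1 hT.2⟩
      (fun i ↦ ⟨⟨(hThstep i).1, (hThstep i).2.1⟩, fun T hT ↦ (hThstep i).2.2 T hT.1 hT.2⟩)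
      hSgstep hLmstep
  exact ⟨Sgbar, Sgbar, Lmbar, hTh, hSg, hLm, rfl, hmem.2, fun S hS hSp ↦ hmin ⟨hS, hSp⟩⟩
end

section
/- Let Z be a p×p real symmetric matrix with spectral decomposition Z = Σ_{i=1}^p λᵢ vᵢvᵢᵀ, where v₁,…,v_p is an orthonormal basis of eigenvectors and λ₁,…,λ_p the corresponding eigenvalues, and let ε ∈ ℝ. Then the matrix Z₊ = Σ_{i=1}^p max(λᵢ, ε) vᵢvᵢᵀ is the unique minimizer of ‖Θ − Z‖_F over all real symmetric matrices Θ such that Θ − εI is positive semidefinite. -/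
open scoped BigOperators

/-!
For the inner product `⟪A, B⟫ = tr (Aᵀ B)`, a point `P` of a set is its nearest point to `Z`, with
`‖Θ - P‖² + ‖P - Z‖² ≤ ‖Θ - Z‖²` for every `Θ` in the set, as soon as `0 ≤ ⟪Θ - P, P - Z⟫`.
For `P = Z₊` this inner product is `∑ i, (max λᵢ ε - λᵢ) (vᵢᵀ Θ vᵢ - max λᵢ ε)`. Its `i`-th term
vanishes if `ε ≤ λᵢ`, and otherwise is `(ε - λᵢ) (vᵢᵀ Θ vᵢ - ε)`, which is nonnegative because
`vᵢᵀ Θ vᵢ ≥ ε`.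
-/

open Matrix

section Frobenius

variable {p : ℕ} {A B P Θ Z : Matrix (Fin p) (Fin p) ℝ}

theorem frobSq_eq_trace (A : Matrix (Fin p) (Fin p) ℝ) : frobSq A = (Aᵀ * A).trace := by
  simp only [frobSq, trace, diag_apply, mul_apply, transpose_apply, ← pow_two]
  exact Finset.sum_comm

theorem frobSq_nonneg (A : Matrix (Fin p) (Fin p) ℝ) : 0 ≤ frobSq A :=
  Finset.sum_nonneg fun _ _ => Finset.sum_nonneg fun _ _ => sq_nonneg _

theorem frobSq_eq_zero : frobSq A = 0 ↔ A = 0 := by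
  rw [frobSq_eq_trace, ← conjTranspose_eq_transpose_of_trivial,
    trace_conjTranspose_mul_self_eq_zero_iff]

theorem frobSq_add (A B : Matrix (Fin p) (Fin p) ℝ) :
    frobSq (A + B) = frobSq A + 2 * (Aᵀ * B).trace + frobSq B := by
  have trace_swap : (Bᵀ * A).trace = (Aᵀ * B).trace := by
    rw [← trace_transpose, transpose_mul, transpose_transpose]
  simp only [frobSq_eq_trace, transpose_add, add_mul, mul_add, trace_add, trace_swap]
  ring

theorem frobNorm_le_frobNorm_iff : frobNorm A ≤ frobNorm B ↔ frobSq A ≤ frobSq B :=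
  Real.sqrt_le_sqrt_iff (frobSq_nonneg B)

theorem frobSq_sub_add_frobSq_sub_le (h : 0 ≤ ((Θ - P)ᵀ * (P - Z)).trace) :
    frobSq (Θ - P) + frobSq (P - Z) ≤ frobSq (Θ - Z) := by
  rw [← sub_add_sub_cancel Θ P Z, frobSq_add]
  linarith

theorem frobNorm_sub_le_of_trace_nonneg (h : 0 ≤ ((Θ - P)ᵀ * (P - Z)).trace) :
    frobNorm (P - Z) ≤ frobNorm (Θ - Z) := by
  rw [frobNorm_le_frobNorm_iff]
  linarith [frobSq_sub_add_frobSq_sub_le h, frobSq_nonneg (Θ - P)]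

theorem eq_of_frobNorm_sub_le_of_trace_nonneg (h : 0 ≤ ((Θ - P)ᵀ * (P - Z)).trace)
    (hle : frobNorm (Θ - Z) ≤ frobNorm (P - Z)) : Θ = P := by
  rw [frobNorm_le_frobNorm_iff] at hle
  have hzero : frobSq (Θ - P) = 0 :=
    le_antisymm (by linarith [frobSq_sub_add_frobSq_sub_le h]) (frobSq_nonneg _)
  exact sub_eq_zero.mp (frobSq_eq_zero.mp hzero)

end Frobenius

theorem le_dotProduct_mulVec_of_posSemidef_sub_smul_one {n : Type*} [Fintype n] [DecidableEq n]
    {Θ : Matrix n n ℝ} {ε : ℝ} (hΘ : (Θ - ε • (1 : Matrix n n ℝ)).PosSemidef) (x : n → ℝ) :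
    ε * (x ⬝ᵥ x) ≤ x ⬝ᵥ Θ *ᵥ x := by
  simpa [sub_mulVec, smul_mulVec] using hΘ.dotProduct_mulVec_nonneg x

theorem max_sub_mul_sub_max_nonneg {a q ε : ℝ} (hq : ε ≤ q) :
    0 ≤ (max a ε - a) * (q - max a ε) := by
  rcases le_total a ε with h | h
  · rw [max_eq_right h]
    exact mul_nonneg (sub_nonneg.mpr h) (sub_nonneg.mpr hq)
  · simp [max_eq_left h]

/-- The matrix `∑ i, cᵢ vᵢ vᵢᵀ`; when the `vᵢ` are orthonormal, a matrix with eigenvectors `vᵢ`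
and eigenvalues `cᵢ`. -/
def spectralSum {R ι n : Type*} [CommSemiring R] [Fintype ι] (c : ι → R) (v : ι → n → R) :
    Matrix n n R :=
  ∑ i, c i • vecMulVec (v i) (v i)

section SpectralSum

variable {R ι n : Type*} [Fintype ι]

theorem isSymm_spectralSum [CommSemiring R] (c : ι → R) (v : ι → n → R) :
    (spectralSum c v).IsSymm := by
  simp only [spectralSum, IsSymm, transpose_sum, transpose_smul, transpose_vecMulVec]

theorem spectralSum_sub [CommRing R] (c d : ι → R) (v : ι → n → R) :
    spectralSum (c - d) v = spectralSum c v - spectralSum d v := by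
  simp only [spectralSum, Pi.sub_apply, sub_smul, Finset.sum_sub_distrib]

theorem trace_transpose_mul_spectralSum [CommSemiring R] [Fintype n] (A : Matrix n n R)
    (c : ι → R) (v : ι → n → R) :
    (Aᵀ * spectralSum c v).trace = ∑ i, c i * (v i ⬝ᵥ A *ᵥ v i) := by
  simp only [spectralSum, Matrix.mul_sum, trace_sum, mul_smul_comm, trace_smul, smul_eq_mul,
    mul_vecMulVec, trace_vecMulVec, mulVec_transpose, dotProduct_mulVec]

theorem dotProduct_spectralSum_mulVec [CommSemiring R] [Fintype n] [DecidableEq ι]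
    {v : ι → n → R} (hv : ∀ i j, v i ⬝ᵥ v j = if i = j then 1 else 0) (c : ι → R) (i : ι) :
    v i ⬝ᵥ spectralSum c v *ᵥ v i = c i := by
  simp [spectralSum, sum_mulVec, smul_mulVec, vecMulVec_mulVec, hv]

theorem spectralSum_const [CommRing R] [Fintype n] [DecidableEq n] {v : n → n → R}
    (hv : ∀ i j, v i ⬝ᵥ v j = if i = j then 1 else 0) (r : R) :
    spectralSum (fun _ => r) v = r • (1 : Matrix n n R) := by
  have rows_orthonormal : of v * (of v)ᵀ = 1 := by
    ext i j
    exact (hv i j).trans (one_apply ..).symm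
  have columns_orthonormal : (of v)ᵀ * of v = 1 := mul_eq_one_comm.mp rows_orthonormal
  rw [spectralSum, ← Finset.smul_sum, ← columns_orthonormal]
  congr 1
  ext a b
  simp [Matrix.sum_apply, mul_apply, vecMulVec_apply]

theorem posSemidef_spectralSum [Finite n] {c : ι → ℝ} (hc : 0 ≤ c) (v : ι → n → ℝ) :
    (spectralSum c v).PosSemidef :=
  posSemidef_sum _ fun i _ => by
    simpa using (posSemidef_vecMulVec_self_star (v i)).smul (hc i)

theorem posSemidef_spectralSum_sub_smul_one [Fintype n] [DecidableEq n] {v : n → n → ℝ}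
    (hv : ∀ i j, v i ⬝ᵥ v j = if i = j then 1 else 0) {c : n → ℝ} {ε : ℝ} (hc : ∀ i, ε ≤ c i) :
    (spectralSum c v - ε • (1 : Matrix n n ℝ)).PosSemidef := by
  rw [← spectralSum_const hv, ← spectralSum_sub]
  exact posSemidef_spectralSum (fun i => sub_nonneg.mpr (hc i)) v

theorem trace_transpose_sub_mul_spectralSum_max_nonneg [Fintype n] [DecidableEq ι]
    {v : ι → n → ℝ} (hv : ∀ i j, v i ⬝ᵥ v j = if i = j then 1 else 0) (lam : ι → ℝ) {ε : ℝ}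
    {Θ : Matrix n n ℝ} (hΘ : ∀ i, ε ≤ v i ⬝ᵥ Θ *ᵥ v i) :
    0 ≤ ((Θ - spectralSum (fun i => max (lam i) ε) v)ᵀ *
      (spectralSum (fun i => max (lam i) ε) v - spectralSum lam v)).trace := by
  rw [← spectralSum_sub, trace_transpose_mul_spectralSum]
  refine Finset.sum_nonneg fun i _ => ?_
  rw [sub_mulVec, dotProduct_sub, dotProduct_spectralSum_mulVec hv]
  exact max_sub_mul_sub_max_nonneg (hΘ i)

end SpectralSum

/-- Let `Z` be a `p×p` real symmetric matrix with spectral decomposition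
`Z = ∑ᵢ λᵢ vᵢ vᵢᵀ` where the `vᵢ` form an orthonormal basis of eigenvectors, and let
`ε ∈ ℝ`.  Then `Z₊ = ∑ᵢ max(λᵢ, ε) vᵢ vᵢᵀ` is the unique minimizer of `‖Θ - Z‖_F` over
all real symmetric matrices `Θ` with `Θ - εI` positive semidefinite. -/
theorem stmt_4 {p : ℕ} (hp : 1 ≤ p)
    (Z : Matrix (Fin p) (Fin p) ℝ) (hZ : Z.IsSymm)
    (lam : Fin p → ℝ) (v : Fin p → Fin p → ℝ)
    (horth : ∀ i j, (∑ k, v i k * v j k) = if i = j then (1 : ℝ) else 0)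
    (hdecomp : Z = ∑ i, lam i • Matrix.vecMulVec (v i) (v i))
    (ε : ℝ) :
    ((∑ i, max (lam i) ε • Matrix.vecMulVec (v i) (v i)).IsSymm ∧
      ((∑ i, max (lam i) ε • Matrix.vecMulVec (v i) (v i)) -
          ε • (1 : Matrix (Fin p) (Fin p) ℝ)).PosSemidef) ∧
    (∀ Θ : Matrix (Fin p) (Fin p) ℝ, Θ.IsSymm →
      (Θ - ε • (1 : Matrix (Fin p) (Fin p) ℝ)).PosSemidef →
      frobNorm ((∑ i, max (lam i) ε • Matrix.vecMulVec (v i) (v i)) - Z) ≤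
        frobNorm (Θ - Z)) ∧
    (∀ Θ : Matrix (Fin p) (Fin p) ℝ, Θ.IsSymm →
      (Θ - ε • (1 : Matrix (Fin p) (Fin p) ℝ)).PosSemidef →
      frobNorm (Θ - Z) = frobNorm ((∑ i, max (lam i) ε • Matrix.vecMulVec (v i) (v i)) - Z) →
      Θ = ∑ i, max (lam i) ε • Matrix.vecMulVec (v i) (v i)) := by
  have hv : ∀ i j, v i ⬝ᵥ v j = if i = j then 1 else 0 := horth
  have trace_nonneg : ∀ Θ : Matrix (Fin p) (Fin p) ℝ,
      (Θ - ε • (1 : Matrix (Fin p) (Fin p) ℝ)).PosSemidef →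
      0 ≤ ((Θ - spectralSum (fun i => max (lam i) ε) v)ᵀ *
        (spectralSum (fun i => max (lam i) ε) v - Z)).trace := by
    intro Θ hΘ
    rw [hdecomp]
    refine trace_transpose_sub_mul_spectralSum_max_nonneg hv lam fun i => ?_
    simpa [hv] using le_dotProduct_mulVec_of_posSemidef_sub_smul_one hΘ (v i)
  refine ⟨⟨isSymm_spectralSum _ v, posSemidef_spectralSum_sub_smul_one hv fun i => ?_⟩,
    fun Θ _ hΘ => ?_, fun Θ _ hΘ heq => ?_⟩
  · exact le_max_right (lam i) ε
  · exact frobNorm_sub_le_of_trace_nonneg (trace_nonneg Θ hΘ)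
  · exact eq_of_frobNorm_sub_le_of_trace_nonneg (trace_nonneg Θ hΘ) heq.le
end

section
/- Let Σ⁰ = (σ⁰_{jk}) be a p×p real symmetric positive definite matrix, let A₀ = {(j,k) : j ≠ k, σ⁰_{jk} ≠ 0} with s = |A₀|, let λ > 0, let 0 < ε be smaller than the minimal eigenvalue of Σ⁰, and let Ŝ be a p×p real symmetric matrix satisfying max_{j,k} |Ŝ_{jk} − σ⁰_{jk}| ≤ λ. Then any minimizer Σ̂⁺ of ½‖Σ − Ŝ‖_F² + λ|Σ|₁ over symmetric matrices Σ with Σ − εI positive semidefinite satisfies ‖Σ̂⁺ − Σ⁰‖_F ≤ 5λ√(s+p). -/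
open scoped BigOperators

/-!
Compare the objective at `Σ̂⁺` with its value at the feasible point `Σ⁰`. With `Δ = Σ̂⁺ - Σ⁰`,
expanding the squares turns this into
`½‖Δ‖_F² ≤ ⟪Ŝ - Σ⁰, Δ⟫ + λ(|Σ⁰|₁ - |Σ̂⁺|₁)`. At an off-diagonal zero of `Σ⁰` the penalty
absorbs the noise, and each of the other `s + p` entries contributes at most `2λ|Δ_{jk}|`.
Cauchy–Schwarz on these entries then gives `‖Δ‖_F² ≤ 4λ√(s + p)‖Δ‖_F`.
-/

section OrderedRing

variable {R : Type*} [CommRing R] [LinearOrder R] [IsStrictOrderedRing R]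

lemma mul_le_mul_abs_of_abs_le {a b c : R} (hac : |a| ≤ c) : a * b ≤ c * |b| :=
  calc a * b ≤ |a| * |b| := (le_abs_self _).trans_eq (abs_mul _ _)
    _ ≤ c * |b| := by gcongr

lemma sq_sum_abs_le_card_mul_sum_sq {ι : Type*} [Fintype ι] (S : Finset ι) (z : ι → R) :
    (∑ i ∈ S, |z i|) ^ 2 ≤ S.card * ∑ i, z i ^ 2 :=
  calc (∑ i ∈ S, |z i|) ^ 2 ≤ S.card * ∑ i ∈ S, |z i| ^ 2 := sq_sum_le_card_mul_sum_sq
    _ = S.card * ∑ i ∈ S, z i ^ 2 := by simp only [sq_abs]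
    _ ≤ S.card * ∑ i, z i ^ 2 := by
      gcongr _ * ?_
      exact Finset.sum_le_univ_sum_of_nonneg fun i ↦ sq_nonneg (z i)

end OrderedRing

section Lasso

variable {ι : Type*} [Fintype ι] {lam : ℝ} {T S : Finset ι} {a x y : ι → ℝ}

/-- The objective of ℓ¹-penalized least squares with data `y` and penalty level `lam`, evaluated at
`x`. Only the coordinates in `T` are penalized. -/
noncomputable def lassoObjective (lam : ℝ) (T : Finset ι) (y x : ι → ℝ) : ℝ :=
  (∑ i, (x i - y i) ^ 2) / 2 + lam * ∑ i ∈ T, |x i|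

lemma half_sum_sq_sub_le_of_lassoObjective_le
    (hle : lassoObjective lam T y x ≤ lassoObjective lam T y a) :
    (∑ i, (x i - a i) ^ 2) / 2 ≤
      ∑ i, (y i - a i) * (x i - a i) + lam * ∑ i ∈ T, (|a i| - |x i|) := by
  have expand : ∑ i, (x i - y i) ^ 2 =
      ∑ i, (x i - a i) ^ 2 - 2 * ∑ i, (y i - a i) * (x i - a i) + ∑ i, (a i - y i) ^ 2 := by
    rw [Finset.mul_sum, ← Finset.sum_sub_distrib, ← Finset.sum_add_distrib]
    exact Finset.sum_congr rfl fun i _ ↦ by ring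
  rw [lassoObjective, lassoObjective, expand] at hle
  rw [Finset.sum_sub_distrib]
  linarith

lemma sum_noise_mul_add_penalty_le (x : ι → ℝ) (hclose : ∀ i, |y i - a i| ≤ lam)
    (hS : ∀ i ∉ S, i ∈ T ∧ a i = 0) :
    ∑ i, (y i - a i) * (x i - a i) + lam * ∑ i ∈ T, (|a i| - |x i|) ≤
      2 * lam * ∑ i ∈ S, |x i - a i| := by
  classical
  have coord (i : ι) : (y i - a i) * (x i - a i) + (if i ∈ T then lam * (|a i| - |x i|) else 0) ≤
      if i ∈ S then 2 * lam * |x i - a i| else 0 := by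
    have hlam : 0 ≤ lam := (abs_nonneg _).trans (hclose i)
    have noise : (y i - a i) * (x i - a i) ≤ lam * |x i - a i| :=
      mul_le_mul_abs_of_abs_le (hclose i)
    by_cases hi : i ∈ S
    · have penalty : (if i ∈ T then lam * (|a i| - |x i|) else 0) ≤ lam * |x i - a i| := by
        split_ifs
        · rw [abs_sub_comm]
          gcongr
          exact abs_sub_abs_le_abs_sub _ _
        · positivity
      rw [if_pos hi]
      linarith
    · obtain ⟨hT, ha⟩ := hS i hi
      rw [ha, sub_zero, sub_zero] at noise
      rw [if_neg hi, if_pos hT, ha, abs_zero, sub_zero, sub_zero]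
      linarith
  simpa only [Finset.sum_add_distrib, Finset.sum_ite_mem, Finset.univ_inter, ← Finset.mul_sum]
    using Finset.sum_le_sum fun i (_ : i ∈ Finset.univ) ↦ coord i

theorem sum_sq_sub_le_of_lassoObjective_le (hclose : ∀ i, |y i - a i| ≤ lam)
    (hS : ∀ i ∉ S, i ∈ T ∧ a i = 0)
    (hle : lassoObjective lam T y x ≤ lassoObjective lam T y a) :
    ∑ i, (x i - a i) ^ 2 ≤ (4 * lam) ^ 2 * S.card := by
  set D := ∑ i, (x i - a i) ^ 2
  have hD : 0 ≤ D := Finset.sum_nonneg fun i _ ↦ sq_nonneg _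
  have linear_bound : D ≤ 4 * lam * ∑ i ∈ S, |x i - a i| := by
    linarith [half_sum_sq_sub_le_of_lassoObjective_le hle,
      sum_noise_mul_add_penalty_le x hclose hS]
  have self_bound : D * D ≤ (4 * lam) ^ 2 * S.card * D :=
    calc D * D = D ^ 2 := (sq D).symm
      _ ≤ (4 * lam * ∑ i ∈ S, |x i - a i|) ^ 2 := by gcongr
      _ = (4 * lam) ^ 2 * (∑ i ∈ S, |x i - a i|) ^ 2 := mul_pow _ _ _
      _ ≤ (4 * lam) ^ 2 * (S.card * D) := by
        gcongr
        exact sq_sum_abs_le_card_mul_sum_sq S _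
      _ = (4 * lam) ^ 2 * S.card * D := (mul_assoc _ _ _).symm
  obtain hD_zero | hD_pos := hD.eq_or_lt
  · rw [← hD_zero]
    positivity
  · exact le_of_mul_le_mul_right self_bound hD_pos

end Lasso

section Matrix

variable {p : ℕ}

lemma frobSq_sub_eq_sum_prod (A B : Matrix (Fin p) (Fin p) ℝ) :
    frobSq (A - B) = ∑ jk, (Function.uncurry A jk - Function.uncurry B jk) ^ 2 :=
  (Fintype.sum_prod_type
    fun jk ↦ (Function.uncurry A jk - Function.uncurry B jk) ^ 2).symm

lemma offL1_eq_sum_offDiag (A : Matrix (Fin p) (Fin p) ℝ) :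
    offL1 A = ∑ jk ∈ Finset.univ.offDiag, |Function.uncurry A jk| := by
  have offDiag_eq : (Finset.univ : Finset (Fin p)).offDiag =
      Finset.univ.filter fun jk : Fin p × Fin p ↦ jk.1 ≠ jk.2 := by
    ext jk
    simp
  rw [offDiag_eq, Finset.sum_filter, Fintype.sum_prod_type]
  rfl

lemma frobSq_half_add_offL1_eq_lassoObjective (lam : ℝ) (A B : Matrix (Fin p) (Fin p) ℝ) :
    frobSq (A - B) / 2 + lam * offL1 A =
      lassoObjective lam Finset.univ.offDiag (Function.uncurry B) (Function.uncurry A) := by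
  rw [lassoObjective, frobSq_sub_eq_sum_prod, offL1_eq_sum_offDiag]

/-- The index set `A₀` of the nonzero off-diagonal entries of a matrix. -/
noncomputable def offDiagSupport (A : Matrix (Fin p) (Fin p) ℝ) : Finset (Fin p × Fin p) :=
  {jk | jk.1 ≠ jk.2 ∧ A jk.1 jk.2 ≠ 0}

lemma mem_offDiag_and_eq_zero_of_notMem_offDiagSupport_union_diag
    {A : Matrix (Fin p) (Fin p) ℝ} {jk : Fin p × Fin p}
    (hjk : jk ∉ offDiagSupport A ∪ Finset.univ.diag) :
    jk ∈ Finset.univ.offDiag ∧ Function.uncurry A jk = 0 := by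
  simp only [offDiagSupport, Finset.mem_union, Finset.mem_filter_univ, Finset.mem_diag,
    Finset.mem_offDiag, Finset.mem_univ, true_and, Function.uncurry] at hjk ⊢
  tauto

lemma card_offDiagSupport_union_diag_le (A : Matrix (Fin p) (Fin p) ℝ) :
    (offDiagSupport A ∪ Finset.univ.diag).card ≤ (offDiagSupport A).card + p :=
  (Finset.card_union_le _ _).trans_eq <| by rw [Finset.diag_card, Finset.card_fin]

theorem frobSq_sub_le_of_objective_le {lam : ℝ} {Sig0 Shat Sg : Matrix (Fin p) (Fin p) ℝ}
    (hclose : ∀ j k, |Shat j k - Sig0 j k| ≤ lam)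
    (hle : frobSq (Sg - Shat) / 2 + lam * offL1 Sg ≤
      frobSq (Sig0 - Shat) / 2 + lam * offL1 Sig0) :
    frobSq (Sg - Sig0) ≤ (4 * lam) ^ 2 * ((offDiagSupport Sig0).card + p) := by
  simp only [frobSq_half_add_offL1_eq_lassoObjective] at hle
  calc frobSq (Sg - Sig0)
      = ∑ jk, (Function.uncurry Sg jk - Function.uncurry Sig0 jk) ^ 2 := frobSq_sub_eq_sum_prod _ _
    _ ≤ (4 * lam) ^ 2 * (offDiagSupport Sig0 ∪ Finset.univ.diag).card :=
      sum_sq_sub_le_of_lassoObjective_le (fun jk ↦ hclose jk.1 jk.2)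
        (fun _ ↦ mem_offDiag_and_eq_zero_of_notMem_offDiagSupport_union_diag) hle
    _ ≤ (4 * lam) ^ 2 * ((offDiagSupport Sig0).card + p) := by
      gcongr
      exact_mod_cast card_offDiagSupport_union_diag_le Sig0

theorem stmt_9_general {lam : ℝ} (hlam : 0 ≤ lam) {Sig0 Shat Sg : Matrix (Fin p) (Fin p) ℝ}
    (hclose : ∀ j k, |Shat j k - Sig0 j k| ≤ lam)
    (hle : frobSq (Sg - Shat) / 2 + lam * offL1 Sg ≤
      frobSq (Sig0 - Shat) / 2 + lam * offL1 Sig0) :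
    frobNorm (Sg - Sig0) ≤ 4 * lam * √((offDiagSupport Sig0).card + p) :=
  calc frobNorm (Sg - Sig0) ≤ √((4 * lam) ^ 2 * ((offDiagSupport Sig0).card + p)) :=
        Real.sqrt_le_sqrt (frobSq_sub_le_of_objective_le hclose hle)
    _ = 4 * lam * √((offDiagSupport Sig0).card + p) := by
      rw [Real.sqrt_mul (sq_nonneg _), Real.sqrt_sq (by positivity)]

end Matrix

/-- Let `Σ⁰` be a `p×p` symmetric positive definite matrix with off-diagonal support of
size `s`, `λ > 0`, `0 < ε` smaller than the minimal eigenvalue of `Σ⁰` (i.e. `Σ⁰ − εI`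
is positive definite), and `Ŝ` symmetric with `max_{j,k} |Ŝ_{jk} − σ⁰_{jk}| ≤ λ`.  Then
any minimizer `Σ̂⁺` of `½‖Σ − Ŝ‖_F² + λ|Σ|₁` over symmetric matrices `Σ` with `Σ − εI`
positive semidefinite satisfies `‖Σ̂⁺ − Σ⁰‖_F ≤ 5λ√(s+p)`. -/
theorem stmt_9 {p : ℕ} (hp : 1 ≤ p)
    (Sig0 : Matrix (Fin p) (Fin p) ℝ) (hSig0 : Sig0.IsSymm) (hSig0pd : Sig0.PosDef)
    (s : ℕ)
    (hs : s = (Finset.univ.filter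
      (fun jk : Fin p × Fin p => jk.1 ≠ jk.2 ∧ Sig0 jk.1 jk.2 ≠ 0)).card)
    (lam : ℝ) (hlam : 0 < lam)
    (ε : ℝ) (hε : 0 < ε)
    (hεmin : (Sig0 - ε • (1 : Matrix (Fin p) (Fin p) ℝ)).PosDef)
    (Shat : Matrix (Fin p) (Fin p) ℝ) (hShat : Shat.IsSymm)
    (hclose : ∀ j k, |Shat j k - Sig0 j k| ≤ lam)
    (Sgplus : Matrix (Fin p) (Fin p) ℝ) (hSgplusSymm : Sgplus.IsSymm)
    (hSgplusPsd : (Sgplus - ε • (1 : Matrix (Fin p) (Fin p) ℝ)).PosSemidef)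
    (hmin : ∀ Sg : Matrix (Fin p) (Fin p) ℝ, Sg.IsSymm →
      (Sg - ε • (1 : Matrix (Fin p) (Fin p) ℝ)).PosSemidef →
      frobSq (Sgplus - Shat) / 2 + lam * offL1 Sgplus ≤
        frobSq (Sg - Shat) / 2 + lam * offL1 Sg) :
    frobNorm (Sgplus - Sig0) ≤ 5 * lam * Real.sqrt (s + p) := by
  subst hs
  exact (stmt_9_general hlam.le hclose (hmin Sig0 hSig0 hεmin.posSemidef)).trans
    (by gcongr ?_ * lam * _; norm_num)
end

section
/- Let X and Y be real random variables on a probability space, and suppose there exist η > 0 and K₁ > 0 such that E[exp(η·X²)] ≤ K₁ and E[exp(η·Y²)] ≤ K₁. Then E[X²Y²·exp(½η|XY|)] ≤ 4K₁·η^{-2}. -/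
open MeasureTheory

/-!
Put `u = ½ η |XY|`, so that `X² Y² = (4 / η²) u²`. Since `u² ≤ exp u`, the integrand is at most
`(4 / η²) exp (2u) = (4 / η²) exp (η |XY|)`. Finally `|XY| ≤ (X² + Y²) / 2` and the convexity of
`exp` bound `exp (η |XY|)` by the average of `exp (η X²)` and `exp (η Y²)`.
-/

open scoped ENNReal

theorem sq_le_exp_of_nonneg {u : ℝ} (hu : 0 ≤ u) : u ^ 2 ≤ Real.exp u := by
  have le_exp_half : u ≤ Real.exp (u / 2) := by
    simpa only [mul_div_cancel₀ u (two_ne_zero' ℝ)] using Real.two_mul_le_exp (x := u / 2)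
  calc u ^ 2 ≤ Real.exp (u / 2) ^ 2 := by gcongr
    _ = Real.exp u := by rw [← Real.exp_nat_mul, Nat.cast_two, mul_div_cancel₀ u two_ne_zero]

theorem sq_mul_exp_half_mul_abs_le {η : ℝ} (hη : 0 < η) (z : ℝ) :
    z ^ 2 * Real.exp (1 / 2 * η * |z|) ≤ 4 / η ^ 2 * Real.exp (η * |z|) := by
  set u := 1 / 2 * η * |z| with hu
  have sq_eq : z ^ 2 = 4 / η ^ 2 * u ^ 2 := by
    rw [hu, mul_pow, sq_abs]
    field_simp
    norm_num
  calc z ^ 2 * Real.exp u = 4 / η ^ 2 * (u ^ 2 * Real.exp u) := by rw [sq_eq, mul_assoc]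
    _ ≤ 4 / η ^ 2 * (Real.exp u * Real.exp u) := by
      gcongr
      exact sq_le_exp_of_nonneg (by positivity)
    _ = 4 / η ^ 2 * Real.exp (η * |z|) := by
      rw [← Real.exp_add, hu]
      ring_nf

theorem exp_add_div_two_le (a b : ℝ) :
    Real.exp ((a + b) / 2) ≤ (Real.exp a + Real.exp b) / 2 := by
  have midpoint_le : Real.exp ((1 / 2 : ℝ) • a + (1 / 2 : ℝ) • b)
      ≤ (1 / 2 : ℝ) • Real.exp a + (1 / 2 : ℝ) • Real.exp b :=
    convexOn_exp.right (Set.mem_univ a) (Set.mem_univ b) one_half_pos.le one_half_pos.le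
      (add_halves 1)
  simpa only [smul_eq_mul, one_div_mul_eq_div, ← add_div] using midpoint_le

theorem exp_mul_abs_mul_le {η : ℝ} (hη : 0 ≤ η) (x y : ℝ) :
    Real.exp (η * |x * y|) ≤ (Real.exp (η * x ^ 2) + Real.exp (η * y ^ 2)) / 2 := by
  have abs_mul_le : |x * y| ≤ (x ^ 2 + y ^ 2) / 2 := by
    rw [abs_mul, ← sq_abs x, ← sq_abs y]
    linarith [two_mul_le_add_sq |x| |y|]
  calc Real.exp (η * |x * y|) ≤ Real.exp (η * ((x ^ 2 + y ^ 2) / 2)) := by gcongr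
    _ = Real.exp ((η * x ^ 2 + η * y ^ 2) / 2) := by ring_nf
    _ ≤ (Real.exp (η * x ^ 2) + Real.exp (η * y ^ 2)) / 2 := exp_add_div_two_le _ _

theorem sq_mul_sq_mul_exp_le {η : ℝ} (hη : 0 < η) (x y : ℝ) :
    x ^ 2 * y ^ 2 * Real.exp (1 / 2 * η * |x * y|)
      ≤ 2 / η ^ 2 * (Real.exp (η * x ^ 2) + Real.exp (η * y ^ 2)) :=
  calc x ^ 2 * y ^ 2 * Real.exp (1 / 2 * η * |x * y|)
    _ ≤ 4 / η ^ 2 * Real.exp (η * |x * y|) := by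
      rw [← mul_pow]
      exact sq_mul_exp_half_mul_abs_le hη (x * y)
    _ ≤ 4 / η ^ 2 * ((Real.exp (η * x ^ 2) + Real.exp (η * y ^ 2)) / 2) := by
      gcongr
      exact exp_mul_abs_mul_le hη.le x y
    _ = 2 / η ^ 2 * (Real.exp (η * x ^ 2) + Real.exp (η * y ^ 2)) := by ring

section

variable {Ω : Type*} [MeasurableSpace Ω] {μ : Measure Ω} {X : Ω → ℝ} {η : ℝ}

theorem lintegral_sq_mul_sq_mul_exp_le (hX : AEMeasurable X μ) (Y : Ω → ℝ) (hη : 0 < η) :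
    ∫⁻ ω, ENNReal.ofReal (X ω ^ 2 * Y ω ^ 2 * Real.exp (1 / 2 * η * |X ω * Y ω|)) ∂μ
      ≤ ENNReal.ofReal (2 / η ^ 2) *
        (∫⁻ ω, ENNReal.ofReal (Real.exp (η * X ω ^ 2)) ∂μ +
          ∫⁻ ω, ENNReal.ofReal (Real.exp (η * Y ω ^ 2)) ∂μ) := by
  rw [← lintegral_add_left' (by fun_prop), ← lintegral_const_mul' _ _ ENNReal.ofReal_ne_top]
  refine lintegral_mono fun ω => ?_
  rw [← ENNReal.ofReal_add (by positivity) (by positivity), ← ENNReal.ofReal_mul (by positivity)]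
  exact ENNReal.ofReal_le_ofReal (sq_mul_sq_mul_exp_le hη (X ω) (Y ω))

theorem stmt_14_general {Y : Ω → ℝ} {K : ℝ≥0∞} (hX : AEMeasurable X μ) (hη : 0 < η)
    (hXtail : ∫⁻ ω, ENNReal.ofReal (Real.exp (η * X ω ^ 2)) ∂μ ≤ K)
    (hYtail : ∫⁻ ω, ENNReal.ofReal (Real.exp (η * Y ω ^ 2)) ∂μ ≤ K) :
    ∫⁻ ω, ENNReal.ofReal (X ω ^ 2 * Y ω ^ 2 * Real.exp (1 / 2 * η * |X ω * Y ω|)) ∂μ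
      ≤ ENNReal.ofReal (4 / η ^ 2) * K :=
  calc _ ≤ ENNReal.ofReal (2 / η ^ 2) * (K + K) :=
      (lintegral_sq_mul_sq_mul_exp_le hX Y hη).trans (by gcongr)
    _ = ENNReal.ofReal (4 / η ^ 2) * K := by
      rw [mul_add, ← add_mul, ← ENNReal.ofReal_add (by positivity) (by positivity)]
      ring_nf

end

/-- Let `X`, `Y` be real random variables with `E[exp(η X²)] ≤ K₁` and
`E[exp(η Y²)] ≤ K₁` for some `η > 0`, `K₁ > 0`.  Then
`E[X² Y² exp(½ η |XY|)] ≤ 4 K₁ η⁻²`. -/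
theorem stmt_14 {Ω : Type*} [MeasurableSpace Ω] (μ : Measure Ω) [IsProbabilityMeasure μ]
    (X Y : Ω → ℝ) (hX : Measurable X) (hY : Measurable Y)
    (η K₁ : ℝ) (hη : 0 < η) (hK₁ : 0 < K₁)
    (hXtail : ∫⁻ ω, ENNReal.ofReal (Real.exp (η * X ω ^ 2)) ∂μ ≤ ENNReal.ofReal K₁)
    (hYtail : ∫⁻ ω, ENNReal.ofReal (Real.exp (η * Y ω ^ 2)) ∂μ ≤ ENNReal.ofReal K₁) :
    ∫⁻ ω, ENNReal.ofReal (X ω ^ 2 * Y ω ^ 2 * Real.exp (1 / 2 * η * |X ω * Y ω|)) ∂μ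
      ≤ ENNReal.ofReal (4 * K₁ / η ^ 2) := by
  rw [mul_div_right_comm, ENNReal.ofReal_mul (by positivity)]
  exact stmt_14_general hX.aemeasurable hη hXtail hYtail
end
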